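/- arXiv:2105.09804 — 7 statements merged into one kernel-verified Lean document; each statement's English description precedes it below -/
import Mathlib

section
/- Let h : (0,1) → (0,1) be a Borel measurable map that preserves the Lebesgue measure ℓ restricted to (0,1), and let j : (0,1] → ℝ be a Borel measurable map such that ℓ({x ∈ (0,1] : j(x) = c}) < 1 for every c ∈ ℝ. Then there do not exist Borel measurable functions f, g : (0,1) → (0,1) such that f(x) + g(y) = j(min{h(x)/y, (1 − h(x))/(1 − y)}) for all x, y ∈ (0,1). -/
open MeasureTheory Set

attribute [local instance] MeasureTheory.Measure.Subtype.measureSpace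

/-- Helper: the value `min (a/y) ((1-a)/(1-y))` lies in `(0,1]` for `a, y ∈ (0,1)`. -/
theorem min_div_mem_Ioc {a y : ℝ} (ha : a ∈ Set.Ioo (0:ℝ) 1) (hy : y ∈ Set.Ioo (0:ℝ) 1) :
    min (a / y) ((1 - a) / (1 - y)) ∈ Set.Ioc (0:ℝ) 1 := by
  obtain ⟨ha0, ha1⟩ := ha
  obtain ⟨hy0, hy1⟩ := hy
  constructor
  · exact lt_min (div_pos ha0 hy0) (div_pos (by linarith) (by linarith))
  · by_contra hcon
    push_neg at hcon
    have h1 : 1 < a / y := lt_of_lt_of_le hcon (min_le_left _ _)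
    have h2 : 1 < (1 - a) / (1 - y) := lt_of_lt_of_le hcon (min_le_right _ _)
    rw [lt_div_iff₀ hy0] at h1
    rw [lt_div_iff₀ (by linarith : (0:ℝ) < 1 - y)] at h2
    linarith

theorem aux_scale {p : ℝ → Prop} (hp : ∀ᵐ a : ℝ, p a) {r : ℝ} (hr : r ≠ 0) :
    ∀ᵐ a : ℝ, p (r * a) := by
  rw [ae_iff] at hp ⊢
  have := Real.volume_preimage_mul_left hr {a | ¬ p a}
  rw [hp, mul_zero] at this
  exact this

theorem aux_inv (J : ℝ → ℝ) (c : ℝ → ℝ) (K : ℝ → ℝ)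
    (hb : ∀ᵐ t : ℝ, t ∈ Ioo (0:ℝ) 1 → J t ∈ Ioo (0:ℝ) 2)
    (hJ : ∀ y ∈ Ioo (0:ℝ) 1, ∀ᵐ a : ℝ, a ∈ Ioo (0:ℝ) y → J (a / y) = K a + c y)
    (r : ℝ) (hr : r ∈ Ioo (0:ℝ) 1) : ∀ᵐ s : ℝ, s ∈ Ioo (0:ℝ) 1 → J s = J (r * s) := by
  obtain ⟨hr0, hr1⟩ := hr
  have hpow : ∀ k : ℕ, r ^ (k+1) ∈ Ioo (0:ℝ) 1 := fun k =>
    ⟨by positivity, pow_lt_one₀ hr0.le hr1 (by omega)⟩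
  have h1 : ∀ᵐ a : ℝ, ∀ k : ℕ, a ∈ Ioo (0:ℝ) (r^(k+1)) → J (a / r^(k+1)) = K a + c (r^(k+1)) :=
    ae_all_iff.2 fun k => hJ _ (hpow k)
  have h2 : ∀ᵐ a : ℝ, ∀ k : ℕ, a ∈ Ioo (0:ℝ) (r^(k+1)) → 
      J (a / r^(k+1)) - J (a / r^k) = K a - K (r * a) := by
    filter_upwards [h1, aux_scale h1 hr0.ne'] with a ha ha' k hk
    have e1 := ha k hk
    have e2 := ha' k ⟨by have := hk.1; positivity, by nlinarith [hk.1, hk.2]⟩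
    have e3 : r * a / r^(k+1) = a / r^k := by
      field_simp
      ring
    rw [e3] at e2
    linarith
  have h3 : ∀ n : ℕ, ∀ᵐ s : ℝ, s ∈ Ioo (0:ℝ) 1 → (n+1) * |J s - J (r * s)| ≤ 2 := by
    intro n
    have hrn : r ^ (n+1) ≠ 0 := by positivity
    filter_upwards [aux_scale h2 hrn, hb, aux_scale hb hrn] with s hs hb1 hb2 hs01
    have hp := (hpow n).1
    have hlt : r^(n+1) * s < r^(n+1) := by nlinarith [hs01.2]
    have key : ∀ k : ℕ, k ≤ n + 1 → J (r^(n+1) * s / r^k) - J (r^(n+1) * s) =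
        k * (K (r^(n+1) * s) - K (r * (r^(n+1) * s))) := by
      intro k
      induction k with
      | zero => intro _; simp
      | succ k ih =>
        intro hk
        have := ih (by omega)
        have h4 := hs k ⟨by have := hs01.1; positivity,
          hlt.trans_le (pow_le_pow_of_le_one hr0.le hr1.le hk)⟩
        push_cast
        linarith
    have k1 := key (n+1) le_rfl
    have k2 := hs n ⟨by have := hs01.1; positivity, hlt⟩
    have e1 : r^(n+1) * s / r^(n+1) = s := by field_simp
    have e2 : r^(n+1) * s / r^n = r * s := by field_simp; ring
    rw [e1, e2] at k2
    rw [e1, ← k2] at k1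
    have b1 := hb1 hs01
    have b2 := hb2 ⟨by have := hs01.1; positivity, hlt.trans (hpow n).2⟩
    have : ((n:ℝ)+1) * |J s - J (r * s)| = |J s - J (r^(n+1) * s)| := by
      rw [k1, abs_mul]; congr 1; push_cast; rw [abs_of_pos]; positivity
    rw [this, abs_le]
    constructor <;> linarith [b1.1, b1.2, b2.1, b2.2]
  filter_upwards [ae_all_iff.2 h3] with s hs hs01
  by_contra hne
  have hpos : 0 < |J s - J (r * s)| := abs_pos.2 (sub_ne_zero.2 hne)
  obtain ⟨n, hn⟩ := exists_nat_gt (2 / |J s - J (r * s)|)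
  rw [div_lt_iff₀ hpos] at hn
  have := hs n hs01
  nlinarith

theorem aux_const (J : ℝ → ℝ) (hm : Measurable J)
    (hJ : ∀ r ∈ Ioo (0:ℝ) 1, ∀ᵐ s : ℝ, s ∈ Ioo (0:ℝ) 1 → J s = J (r * s)) :
    ∃ c, ∀ᵐ s : ℝ, s ∈ Ioo (0:ℝ) 1 → J s = c := by
  have hms : MeasurableSet {p : ℝ × ℝ | p.1 ∈ Ioo (0:ℝ) 1 → p.2 ∈ Ioo (0:ℝ) 1 → J p.2 = J (p.1 * p.2)} := by
    have e : {p : ℝ × ℝ | p.1 ∈ Ioo (0:ℝ) 1 → p.2 ∈ Ioo (0:ℝ) 1 → J p.2 = J (p.1 * p.2)} =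
      (Prod.fst ⁻¹' Ioo (0:ℝ) 1)ᶜ ∪ ((Prod.snd ⁻¹' Ioo (0:ℝ) 1)ᶜ ∪ {p : ℝ × ℝ | J p.2 = J (p.1 * p.2)}) := by
      ext p; simp only [mem_setOf_eq, mem_union, mem_compl_iff, mem_preimage]; tauto
    rw [e]
    refine (measurable_fst measurableSet_Ioo).compl.union
      ((measurable_snd measurableSet_Ioo).compl.union (measurableSet_eq_fun ?_ ?_))
    · exact hm.comp measurable_snd
    · exact hm.comp (measurable_fst.mul measurable_snd)
  have h1 : ∀ᵐ r : ℝ, ∀ᵐ s : ℝ, r ∈ Ioo (0:ℝ) 1 → s ∈ Ioo (0:ℝ) 1 → J s = J (r * s) := by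
    refine Filter.Eventually.of_forall fun r => ?_
    by_cases hr : r ∈ Ioo (0:ℝ) 1
    · filter_upwards [hJ r hr] with s hs _ using hs
    · exact Filter.Eventually.of_forall fun s h => absurd h hr
  have h2 : ∀ᵐ s : ℝ, ∀ᵐ r : ℝ, r ∈ Ioo (0:ℝ) 1 → s ∈ Ioo (0:ℝ) 1 → J s = J (r * s) :=
    (Measure.ae_ae_comm hms).1 h1
  obtain ⟨s0, hs0, hs⟩ : ∃ s0 ∈ Ioo (0:ℝ) 1, ∀ᵐ r : ℝ, r ∈ Ioo (0:ℝ) 1 → s0 ∈ Ioo (0:ℝ) 1 → J s0 = J (r * s0) := by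
    by_contra hcon
    have : volume (Ioo (0:ℝ) 1) = 0 := by
      refine measure_mono_null ?_ (ae_iff.1 h2)
      intro s hs
      exact fun hcc => hcon ⟨s, hs, hcc⟩
    simp at this
  refine ⟨J s0, ?_⟩
  filter_upwards [hs, hJ s0 hs0] with s h3 h4 hs01
  rw [h4 hs01, h3 hs01 hs0, mul_comm]

theorem no_measurable_solution_uniform_min
    (h : Set.Ioo (0:ℝ) 1 → Set.Ioo (0:ℝ) 1) (hh : Measurable h)
    (hpres : ∀ A : Set (Set.Ioo (0:ℝ) 1), MeasurableSet A → volume (h ⁻¹' A) = volume A)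
    (j : Set.Ioc (0:ℝ) 1 → ℝ) (hj : Measurable j)
    (hjc : ∀ c : ℝ, volume {x : Set.Ioc (0:ℝ) 1 | j x = c} < 1) :
    ¬ ∃ f g : Set.Ioo (0:ℝ) 1 → Set.Ioo (0:ℝ) 1, Measurable f ∧ Measurable g ∧
      ∀ x y : Set.Ioo (0:ℝ) 1,
        (f x : ℝ) + (g y : ℝ) =
          j ⟨min ((h x : ℝ) / (y : ℝ)) ((1 - (h x : ℝ)) / (1 - (y : ℝ))),
             min_div_mem_Ioc (h x).2 y.2⟩ := by
  rintro ⟨f, g, -, -, hfg⟩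
  let J : ℝ → ℝ := Function.extend Subtype.val j 0
  have hJm : Measurable J :=
    (MeasurableEmbedding.subtype_coe measurableSet_Ioc).measurable_extend hj measurable_const
  have hJj : ∀ x : Set.Ioc (0:ℝ) 1, J x = j x := fun x =>
    Subtype.val_injective.extend_apply j 0 x
  let m : ℝ → ℝ → ℝ := fun a y => min (a / y) ((1 - a) / (1 - y))
  have hmm : ∀ y, Measurable fun a => J (m a y) := fun y => by
    refine hJm.comp ?_
    exact (measurable_id.div_const y).min ((measurable_const.sub measurable_id).div_const (1-y))
  have hfg' : ∀ x y : Set.Ioo (0:ℝ) 1, (f x : ℝ) + g y = J (m (h x) y) := by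
    intro x y
    rw [hfg x y]
    exact (hJj ⟨_, min_div_mem_Ioc (h x).2 y.2⟩).symm
  -- transfer
  have htr : ∀ S : Set ℝ, MeasurableSet S → (∀ x, (h x : ℝ) ∈ S) →
      ∀ᵐ a : ℝ, a ∈ Ioo (0:ℝ) 1 → a ∈ S := by
    intro S hS hx
    have h0 : volume (Subtype.val ⁻¹' Sᶜ : Set (Ioo (0:ℝ) 1)) = 0 := by
      rw [← hpres _ (measurable_subtype_coe hS.compl)]
      have : h ⁻¹' (Subtype.val ⁻¹' Sᶜ : Set (Ioo (0:ℝ) 1)) = ∅ := by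
        ext x; simp [hx x]
      rw [this, measure_empty]
    rw [← ae_restrict_iff' measurableSet_Ioo, ae_restrict_iff_subtype measurableSet_Ioo]
    exact ae_iff.2 h0
  let y0 : Ioo (0:ℝ) 1 := ⟨1/2, by norm_num, by norm_num⟩
  have hm1 : ∀ a y : ℝ, a ∈ Ioo (0:ℝ) y → y ∈ Ioo (0:ℝ) 1 → m a y = a / y := by
    intro a y ha hy
    refine min_eq_left ?_
    have : 0 < 1 - y := by linarith [hy.2]
    rw [div_le_div_iff₀ hy.1 this]
    nlinarith [ha.1, ha.2]
  have hb : ∀ᵐ t : ℝ, t ∈ Ioo (0:ℝ) 1 → J t ∈ Ioo (0:ℝ) 2 := by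
    have h1 := htr ((fun a => J (m a y0)) ⁻¹' Ioo (0:ℝ) 2) (hmm y0 measurableSet_Ioo) (by
      intro x
      change J (m (h x) y0) ∈ Ioo (0:ℝ) 2
      rw [← hfg' x y0]
      have := (f x).2; have := (g y0).2
      simp only [mem_Ioo] at *
      constructor <;> linarith)
    filter_upwards [aux_scale h1 (r := 1/2) (by norm_num)] with t ht ht01
    have h2 := ht ⟨by linarith [ht01.1], by linarith [ht01.2]⟩
    change J (m (1/2 * t) (1/2)) ∈ Ioo (0:ℝ) 2 at h2
    rw [hm1 _ _ ⟨by linarith [ht01.1], by linarith [ht01.2]⟩ (by norm_num)] at h2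
    rwa [mul_div_cancel_left₀ _ (by norm_num)] at h2
  let c : ℝ → ℝ := fun y => Function.extend Subtype.val (fun y => (g y : ℝ) - g y0) 0 y
  have hJc : ∀ y ∈ Ioo (0:ℝ) 1, ∀ᵐ a : ℝ, a ∈ Ioo (0:ℝ) y → J (a / y) = J (m a y0) + c y := by
    intro y hy
    have hc : c y = g ⟨y, hy⟩ - g y0 :=
      Subtype.val_injective.extend_apply (fun y : Ioo (0:ℝ) 1 => (g y : ℝ) - g y0) 0 ⟨y, hy⟩
    have h1 := htr {a | J (m a y) = J (m a y0) + c y}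
      (measurableSet_eq_fun (hmm y) ((hmm y0).add_const _)) (by
        intro x
        change J (m (h x) y) = J (m (h x) y0) + c y
        rw [hc, ← hfg' x y0, ← hfg' x ⟨y, hy⟩]; ring)
    filter_upwards [h1] with a ha hay
    rw [← hm1 a y hay hy]
    exact ha ⟨hay.1, hay.2.trans hy.2⟩
  obtain ⟨C, hC⟩ := aux_const J hJm (aux_inv J c (fun a => J (m a y0)) hb hJc)
  refine (hjc C).ne ?_
  have hne : ∀ᵐ s : ℝ, s ≠ 1 := by simp [ae_iff]
  have h5 : ∀ᵐ s : ℝ, s ∈ Ioc (0:ℝ) 1 → J s = C := by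
    filter_upwards [hC, hne] with s hs h1 hs2
    exact hs ⟨hs2.1, lt_of_le_of_ne hs2.2 h1⟩
  rw [← ae_restrict_iff' measurableSet_Ioc, ae_restrict_iff_subtype measurableSet_Ioc] at h5
  have h6 : {x : Set.Ioc (0:ℝ) 1 | j x = C} ∈ ae (volume : Measure (Set.Ioc (0:ℝ) 1)) := by
    filter_upwards [h5] with x hx
    rw [← hx, hJj]
  have h7 : volume {x : Set.Ioc (0:ℝ) 1 | j x = C} = volume (univ : Set (Set.Ioc (0:ℝ) 1)) :=
    measure_congr (Filter.eventuallyEq_univ.2 h6)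
  rw [h7]
  rw [Measure.Subtype.volume_univ measurableSet_Ioc.nullMeasurableSet]
  simp
end

section
/- Let h : (0,1) → (0,1) be a Borel measurable map that preserves the Lebesgue measure ℓ restricted to (0,1), and let j : [0,1) → ℝ be a Borel measurable map such that ℓ({x ∈ [0,1) : j(x) = c}) < 1 for every c ∈ ℝ. Then there do not exist Borel measurable functions f, g : (0,1) → (0,1) such that f(x) + g(y) = j(frac(h(x) + y)) for all x, y ∈ (0,1), where frac(z) denotes the fractional part of z. -/
open MeasureTheory Set

attribute [local instance] MeasureTheory.Measure.Subtype.measureSpace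

theorem aux_int (F : ℝ → ℝ) (hF : Function.Periodic F 1) (a : ℝ) :
    ∫ y : Set.Ioo (0:ℝ) 1, F (a + y) = ∫ t in (0:ℝ)..1, F t := by
  have h1 : ∫ y : Set.Ioo (0:ℝ) 1, F (a + y) = ∫ y in Set.Ioo (0:ℝ) 1, F (a + y) :=
    integral_subtype_comap (μ := (volume : Measure ℝ)) measurableSet_Ioo (fun y => F (a + y))
  rw [h1, ← integral_Ioc_eq_integral_Ioo, ← intervalIntegral.integral_of_le zero_le_one,
    intervalIntegral.integral_comp_add_left]
  have := hF.intervalIntegral_add_eq a 0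
  simpa using this

theorem no_measurable_solution_uniform_fract
    (h : Set.Ioo (0:ℝ) 1 → Set.Ioo (0:ℝ) 1) (hh : Measurable h)
    (hpres : ∀ A : Set (Set.Ioo (0:ℝ) 1), MeasurableSet A → volume (h ⁻¹' A) = volume A)
    (j : Set.Ico (0:ℝ) 1 → ℝ) (hj : Measurable j)
    (hjc : ∀ c : ℝ, volume {x : Set.Ico (0:ℝ) 1 | j x = c} < 1) :
    ¬ ∃ f g : Set.Ioo (0:ℝ) 1 → Set.Ioo (0:ℝ) 1, Measurable f ∧ Measurable g ∧
      ∀ x y : Set.Ioo (0:ℝ) 1,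
        (f x : ℝ) + (g y : ℝ) =
          j ⟨Int.fract ((h x : ℝ) + (y : ℝ)),
             ⟨Int.fract_nonneg _, Int.fract_lt_one _⟩⟩ := by
  rintro ⟨f, g, hf, hg, H⟩
  have hvol : (volume : Measure (Set.Ioo (0:ℝ) 1)) univ = 1 := by
    rw [Measure.Subtype.volume_univ measurableSet_Ioo.nullMeasurableSet]; simp
  have hvol' : (volume : Measure (Set.Ico (0:ℝ) 1)) univ = 1 := by
    rw [Measure.Subtype.volume_univ measurableSet_Ico.nullMeasurableSet]; simp
  haveI : IsProbabilityMeasure (volume : Measure (Set.Ioo (0:ℝ) 1)) := ⟨hvol⟩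
  have hint : ∀ k : Set.Ioo (0:ℝ) 1 → Set.Ioo (0:ℝ) 1, Measurable k →
      Integrable (fun x => (k x : ℝ)) volume := by
    intro k hk
    refine Integrable.of_bound (measurable_subtype_coe.comp hk).aestronglyMeasurable 1 ?_
    refine Filter.Eventually.of_forall fun x => ?_
    rw [Real.norm_eq_abs, abs_of_pos (k x).2.1]
    exact (k x).2.2.le
  obtain ⟨F, hFd⟩ : ∃ F : ℝ → ℝ, F = fun t =>
      j ⟨Int.fract t, ⟨Int.fract_nonneg _, Int.fract_lt_one _⟩⟩ := ⟨_, rfl⟩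
  have hFm : Measurable F := by
    rw [hFd]
    exact hj.comp (measurable_fract.subtype_mk)
  have hFp : Function.Periodic F 1 := by
    intro t; simp [hFd]
  have H' : ∀ x y : Set.Ioo (0:ℝ) 1, (f x : ℝ) + g y = F (h x + y) := by
    intro x y; rw [H, hFd]
  obtain ⟨J, hJ⟩ : ∃ J, J = ∫ t in (0:ℝ)..1, F t := ⟨_, rfl⟩
  have hfc : ∀ x, (f x : ℝ) + ∫ y, (g y : ℝ) = J := by
    intro x
    rw [hJ, ← aux_int F hFp (h x), ← integral_congr_ae (Filter.Eventually.of_forall (H' x)),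
      integral_add (integrable_const _) (hint g hg)]
    simp
  have hmap : Measure.map h volume = volume := by
    ext A hA
    rw [Measure.map_apply hh hA, hpres A hA]
  have hgc : ∀ y, (∫ x, (f x : ℝ)) + (g y : ℝ) = J := by
    intro y
    have e : ∫ x, F (h x + y) = ∫ t : Set.Ioo (0:ℝ) 1, F (y + t) := by
      conv_rhs => rw [← hmap]
      rw [integral_map hh.aemeasurable]
      · simp only [add_comm]
      · exact (hFm.comp (measurable_subtype_coe.const_add _)).aestronglyMeasurable
    rw [hJ, ← aux_int F hFp y, ← e,
      ← integral_congr_ae (Filter.Eventually.of_forall (fun x => H' x y)),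
      integral_add (hint f hf) (integrable_const _)]
    simp
  let x0 : Set.Ioo (0:ℝ) 1 := ⟨1/2, by norm_num, by norm_num⟩
  have ha := (h x0).2
  have hc : ∀ y, (f x0 : ℝ) + g y = f x0 + g x0 := by
    intro y; linarith [hgc y, hgc x0]
  let a' : Set.Ico (0:ℝ) 1 := ⟨h x0, ha.1.le, ha.2⟩
  refine absurd (hjc (f x0 + g x0)) (not_lt.2 ?_)
  have hsub : ({a'}ᶜ : Set (Set.Ico (0:ℝ) 1)) ⊆ {x | j x = f x0 + g x0} := by
    intro t ht
    have hne : (t : ℝ) ≠ h x0 := fun e => ht (Subtype.ext e)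
    have hpos : 0 < Int.fract ((t:ℝ) - h x0) := by
      refine lt_of_le_of_ne (Int.fract_nonneg _) fun e => ?_
      obtain ⟨n, hn⟩ := Int.fract_eq_zero_iff.1 e.symm
      have h1 : (n:ℝ) < 1 := by rw [hn]; linarith [t.2.2, ha.1]
      have h2 : (-1:ℝ) < n := by rw [hn]; linarith [t.2.1, ha.2]
      have h3 : n < 1 := by exact_mod_cast h1
      have h4 : -1 < n := by exact_mod_cast h2
      have h5 : n = 0 := by omega
      rw [h5] at hn
      apply hne
      push_cast at hn
      linarith
    have := H x0 ⟨Int.fract ((t:ℝ) - h x0), hpos, Int.fract_lt_one _⟩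
    rw [hc] at this
    show j t = _
    rw [this]
    congr 1
    apply Subtype.ext
    show (t:ℝ) = Int.fract ((h x0 : ℝ) + Int.fract ((t:ℝ) - h x0))
    symm
    rw [Int.fract_eq_iff]
    refine ⟨t.2.1, t.2.2, -⌊(t:ℝ) - h x0⌋, ?_⟩
    rw [Int.fract]; push_cast; ring
  refine le_trans ?_ (measure_mono hsub)
  have h0 : (volume : Measure (Set.Ico (0:ℝ) 1)) {a'} = 0 := by
    rw [Measure.Subtype.volume_def, comap_subtype_coe_apply measurableSet_Ico]
    simp
  rw [measure_compl (measurableSet_singleton _) (by simp [h0]), h0, hvol']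
  simp
end

section
/- Let h : ℝ → ℝ be a Borel measurable map preserving the standard Cauchy measure, and let j : ℝ → ℝ be a Borel measurable map such that ℓ({x ∈ ℝ : j(x) = c}) < 1 for every c ∈ ℝ. Then there do not exist Borel measurable functions f, g : ℝ → ℝ such that f(x) + g(y) = j((h(x) + y)/(1 − h(x)·y)) for all x, y ∈ ℝ with 1 − h(x)·y ≠ 0. -/
open MeasureTheory

/-- The standard Cauchy measure on `ℝ`: density `1/(π(1+x²))` w.r.t. Lebesgue measure. -/
noncomputable def stdCauchyMeasure : Measure ℝ :=
  volume.withDensity fun x => ENNReal.ofReal (1 / (Real.pi * (1 + x ^ 2)))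

lemma aux_shift (ν : Measure ℝ) [IsFiniteMeasure ν] (t : ℝ) (ht : 0 < t)
    (H : ∀ s, ν (Set.Iic (s + t)) = ν (Set.Iic s)) : ν Set.univ = 0 := by
  have h1 : ∀ n : ℕ, ν (Set.Iic ((n : ℝ) * t)) = ν (Set.Iic 0) := by
    intro n
    induction n with
    | zero => simp
    | succ k ih => rw [← ih, ← H (k * t)]; congr 2; push_cast; ring
  have h2 : ∀ n : ℕ, ν (Set.Iic (-((n : ℝ) * t))) = ν (Set.Iic 0) := by
    intro n
    induction n with
    | zero => simp
    | succ k ih => rw [← ih, ← H (-(((k + 1 : ℕ) : ℝ) * t))]; congr 2; push_cast; ring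
  have hT : Filter.Tendsto (fun n : ℕ => (n : ℝ) * t) Filter.atTop Filter.atTop :=
    tendsto_natCast_atTop_atTop.atTop_mul_const ht
  have a1 := (tendsto_measure_Iic_atTop ν).comp hT
  have b1 := tendsto_nhds_unique a1 (by
    simp only [Function.comp_def, h1]; exact tendsto_const_nhds)
  have h3 : ∀ n : ℕ, ν (Set.Ioi (-((n : ℝ) * t))) = 0 := by
    intro n
    rw [← Set.compl_Iic, measure_compl measurableSet_Iic (measure_ne_top _ _), h2, b1, tsub_self]
  have h4 : (Set.univ : Set ℝ) ⊆ ⋃ n : ℕ, Set.Ioi (-((n : ℝ) * t)) := by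
    intro x _
    obtain ⟨n, hn⟩ := exists_nat_gt (-x / t)
    rw [div_lt_iff₀ ht] at hn
    exact Set.mem_iUnion.2 ⟨n, by rw [Set.mem_Ioi]; linarith⟩
  exact measure_mono_null h4 (measure_iUnion_null h3)

instance : IsFiniteMeasure stdCauchyMeasure := by
  unfold stdCauchyMeasure
  apply isFiniteMeasure_withDensity_ofReal
  have := (integrable_inv_one_add_sq.const_mul (Real.pi⁻¹)).2
  have e : (fun x : ℝ => 1 / (Real.pi * (1 + x ^ 2))) = fun x => Real.pi⁻¹ * (1 + x ^ 2)⁻¹ := by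
    funext x
    rw [one_div, mul_inv]
  rw [e]
  exact this

lemma vol_ac : (volume : Measure ℝ) ≪ stdCauchyMeasure := by
  unfold stdCauchyMeasure
  apply withDensity_absolutelyContinuous'
  · fun_prop
  · refine Filter.Eventually.of_forall fun x => ?_
    have : 0 < 1 / (Real.pi * (1 + x ^ 2)) := by positivity
    simpa using this

lemma null_aux (a : ℝ) : volume {y : ℝ | 1 - a * y ≠ 0}ᶜ = 0 := by
  apply Set.Subsingleton.measure_zero
  intro x hx y hy
  simp only [Set.mem_compl_iff, Set.mem_ofPred_eq, not_not] at hx hy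
  have : a ≠ 0 := by rintro rfl; simp at hx
  apply mul_left_cancel₀ this
  linarith

lemma meas_aux (a : ℝ) : MeasurableSet {y : ℝ | 1 - a * y ≠ 0} :=
  (measurableSet_eq_fun (by fun_prop) measurable_const).compl

lemma rot_aux (a : ℝ) (B : Set ℝ) (hB : MeasurableSet B) :
    stdCauchyMeasure ({y | 1 - a * y ≠ 0} ∩ (fun y => (a + y) / (1 - a * y)) ⁻¹' B)
      = stdCauchyMeasure B := by
  set S := {y : ℝ | 1 - a * y ≠ 0} with hS
  set T : ℝ → ℝ := fun y => (a + y) / (1 - a * y) with hT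
  have hTm : Measurable T := by fun_prop
  have hSm : MeasurableSet S := meas_aux a
  have hD : MeasurableSet (S ∩ T ⁻¹' B) := hSm.inter (hTm hB)
  have hpos : (0:ℝ) < 1 + a ^ 2 := by positivity
  have himg : T '' (S ∩ T ⁻¹' B) = B ∩ {y : ℝ | 1 - (-a) * y ≠ 0} := by
    ext z
    constructor
    · rintro ⟨y, ⟨hy, hyB⟩, rfl⟩
      refine ⟨hyB, ?_⟩
      have hy' : 1 - a * y ≠ 0 := hy
      have : 1 - (-a) * T y = (1 + a ^ 2) / (1 - a * y) := by
        simp only [hT]; field_simp; ring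
      show 1 - (-a) * T y ≠ 0
      rw [this]
      exact div_ne_zero hpos.ne' hy'
    · rintro ⟨hzB, hz⟩
      have hz' : 1 + a * z ≠ 0 := by
        have : 1 - (-a) * z ≠ 0 := hz
        intro h; apply this; linarith
      have e1 : 1 - a * ((z - a) / (1 + a * z)) = (1 + a ^ 2) / (1 + a * z) := by
        field_simp; ring
      have e2 : T ((z - a) / (1 + a * z)) = z := by
        simp only [hT]
        rw [e1, div_eq_iff (div_ne_zero hpos.ne' hz')]
        field_simp; ring
      refine ⟨(z - a) / (1 + a * z), ⟨?_, ?_⟩, e2⟩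
      · show 1 - a * ((z - a) / (1 + a * z)) ≠ 0
        rw [e1]; exact div_ne_zero hpos.ne' hz'
      · show T _ ∈ B
        rw [e2]; exact hzB
  have hder : ∀ y ∈ S ∩ T ⁻¹' B,
      HasDerivWithinAt T ((1 + a ^ 2) / (1 - a * y) ^ 2) (S ∩ T ⁻¹' B) y := by
    rintro y ⟨hy, -⟩
    have hy' : 1 - a * y ≠ 0 := hy
    have d1 : HasDerivAt (fun y : ℝ => a + y) 1 y := (hasDerivAt_id y).const_add a
    have d2 : HasDerivAt (fun y : ℝ => 1 - a * y) (-(a * 1)) y :=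
      ((hasDerivAt_id y).const_mul a).const_sub 1
    have := d1.div d2 hy'
    refine HasDerivAt.hasDerivWithinAt ?_
    have e : (1 * (1 - a * y) - (a + y) * -(a * 1)) = 1 + a ^ 2 := by ring
    rw [e] at this
    exact this
  have hinj : Set.InjOn T (S ∩ T ⁻¹' B) := by
    rintro y ⟨hy, -⟩ z ⟨hz, -⟩ hyz
    have hy' : 1 - a * y ≠ 0 := hy
    have hz' : 1 - a * z ≠ 0 := hz
    simp only [hT] at hyz
    rw [div_eq_div_iff hy' hz'] at hyz
    apply mul_left_cancel₀ hpos.ne'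
    linarith
  have key := lintegral_image_eq_lintegral_abs_deriv_mul hD hder hinj
    (fun x => ENNReal.ofReal (1 / (Real.pi * (1 + x ^ 2))))
  rw [himg] at key
  have hBB : stdCauchyMeasure B = stdCauchyMeasure (B ∩ {y : ℝ | 1 - (-a) * y ≠ 0}) := by
    symm
    apply measure_inter_conull
    exact withDensity_absolutelyContinuous _ _ (null_aux (-a))
  rw [hBB]
  unfold stdCauchyMeasure
  rw [withDensity_apply _ hD, withDensity_apply _ (hB.inter (meas_aux (-a))), key]
  refine setLIntegral_congr_fun hD ?_
  rintro y ⟨hy, -⟩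
  have hy' : 1 - a * y ≠ 0 := hy
  have hq : 0 < (1 - a * y) ^ 2 := by positivity
  simp only
  rw [abs_of_nonneg (by positivity), ← ENNReal.ofReal_mul (by positivity)]
  congr 1
  have e : 1 + T y ^ 2 = (1 + a ^ 2) * (1 + y ^ 2) / (1 - a * y) ^ 2 := by
    simp only [hT]; field_simp; ring
  rw [e]
  have : 1 + y ^ 2 ≠ 0 := by positivity
  have := Real.pi_ne_zero
  generalize 1 - a * y = q at hy'
  field_simp

theorem no_measurable_solution_cauchy
    (h : ℝ → ℝ) (hh : Measurable h)
    (hpres : Measure.map h stdCauchyMeasure = stdCauchyMeasure)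
    (j : ℝ → ℝ) (hj : Measurable j)
    (hjc : ∀ c : ℝ, volume {x : ℝ | j x = c} < 1) :
    ¬ ∃ f g : ℝ → ℝ, Measurable f ∧ Measurable g ∧
      ∀ x y : ℝ, 1 - h x * y ≠ 0 →
        f x + g y = j ((h x + y) / (1 - h x * y)) := by
  rintro ⟨f, g, hf, hg, H⟩
  have hF : ∀ x s, (stdCauchyMeasure.map g) (Set.Iic (s - f x))
      = stdCauchyMeasure (j ⁻¹' Set.Iic s) := by
    intro x s
    rw [Measure.map_apply hg measurableSet_Iic, ← rot_aux (h x) _ (hj measurableSet_Iic)]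
    have : {y | 1 - h x * y ≠ 0} ∩ (fun y => (h x + y) / (1 - h x * y)) ⁻¹' (j ⁻¹' Set.Iic s)
        = (g ⁻¹' Set.Iic (s - f x)) ∩ {y | 1 - h x * y ≠ 0} := by
      ext y
      simp only [Set.mem_inter_iff, Set.mem_ofPred_eq, Set.mem_preimage, Set.mem_Iic]
      constructor
      · rintro ⟨h1, h2⟩
        rw [← H x y h1] at h2
        exact ⟨by linarith, h1⟩
      · rintro ⟨h2, h1⟩
        rw [← H x y h1]
        exact ⟨h1, by linarith⟩
    rw [this]
    symm
    apply measure_inter_conull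
    exact withDensity_absolutelyContinuous _ _ (null_aux (h x))
  have hle : ∀ x x', ¬ f x < f x' := by
    intro x x' hlt
    have := aux_shift (stdCauchyMeasure.map g) (f x' - f x) (by linarith) (by
      intro s
      have e1 := hF x (s + f x')
      have e2 := hF x' (s + f x')
      rw [show s + (f x' - f x) = s + f x' - f x by ring, e1, ← e2]
      congr 2; ring)
    rw [Measure.map_apply hg MeasurableSet.univ, Set.preimage_univ] at this
    have := vol_ac this
    simp at this
  have hm : MeasurableSet {x : ℝ | j x = f 0 + g 0}ᶜ :=
    (measurableSet_eq_fun hj measurable_const).compl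
  have h0 : stdCauchyMeasure {x : ℝ | j x = f 0 + g 0}ᶜ = 0 := by
    rw [← hpres, Measure.map_apply hh hm]
    convert measure_empty (μ := stdCauchyMeasure)
    ext x
    have hx := H x 0 (by simp)
    have : f x = f 0 := le_antisymm (not_lt.1 (hle 0 x)) (not_lt.1 (hle x 0))
    simp at hx
    simp [← hx, this]
  have h1 := vol_ac h0
  have h2 := hjc (f 0 + g 0)
  have h3 := measure_add_measure_compl (μ := (volume : Measure ℝ)) hm.of_compl
  rw [h1, add_zero, Real.volume_univ] at h3
  rw [h3] at h2
  simp at h2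
end

section
/- Let X and Y be real-valued random variables on a probability space. If X and Y are independent, and X + Y and Y are independent, then Y is almost surely constant: there exists a constant C ∈ ℝ such that P(Y = C) = 1. -/
open MeasureTheory ProbabilityTheory

theorem dirac_characterization
    {Ω : Type*} [MeasureSpace Ω] [IsProbabilityMeasure (ℙ : Measure Ω)]
    (X Y : Ω → ℝ) (hX : Measurable X) (hY : Measurable Y)
    (hXY : IndepFun X Y) (hXYY : IndepFun (X + Y) Y) :
    ∃ C : ℝ, ℙ {ω | Y ω = C} = 1 := by
  have key : ∀ a b : ℝ, a < b → (ℙ : Measure Ω) (Y ⁻¹' Set.Iic a) ≠ 0 →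
      (ℙ : Measure Ω) (Y ⁻¹' Set.Ici b) ≠ 0 → False := by
    intro a b hab ha hb
    have hstep : ∀ s : ℝ, (ℙ : Measure Ω) (X ⁻¹' Set.Iic (s + (b - a))) ≤
        (ℙ : Measure Ω) (X ⁻¹' Set.Iic s) := by
      intro s
      have h1 : (ℙ : Measure Ω) (X ⁻¹' Set.Iic (s + (b - a))) ≤
          (ℙ : Measure Ω) ((X + Y) ⁻¹' Set.Iic (s + b)) := by
        rw [← ENNReal.mul_le_mul_iff_left ha (measure_ne_top _ _),
          ← hXY.measure_inter_preimage_eq_mul _ _ measurableSet_Iic measurableSet_Iic,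
          ← hXYY.measure_inter_preimage_eq_mul _ _ measurableSet_Iic measurableSet_Iic]
        apply measure_mono
        rintro ω ⟨h1, h2⟩
        simp only [Set.mem_preimage, Set.mem_Iic, Set.mem_inter_iff, Pi.add_apply] at *
        exact ⟨by linarith, h2⟩
      have h2 : (ℙ : Measure Ω) ((X + Y) ⁻¹' Set.Iic (s + b)) ≤
          (ℙ : Measure Ω) (X ⁻¹' Set.Iic s) := by
        rw [← ENNReal.mul_le_mul_iff_left hb (measure_ne_top _ _),
          ← hXY.measure_inter_preimage_eq_mul _ _ measurableSet_Iic measurableSet_Ici,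
          ← hXYY.measure_inter_preimage_eq_mul _ _ measurableSet_Iic measurableSet_Ici]
        apply measure_mono
        rintro ω ⟨h1, h2⟩
        simp only [Set.mem_preimage, Set.mem_Iic, Set.mem_Ici, Set.mem_inter_iff,
          Pi.add_apply] at *
        exact ⟨by linarith, h2⟩
      exact h1.trans h2
    have : IsProbabilityMeasure ((ℙ : Measure Ω).map X) :=
      Measure.isProbabilityMeasure_map hX.aemeasurable
    set F := cdf ((ℙ : Measure Ω).map X) with hF
    have hFs : ∀ s : ℝ, F (s + (b - a)) ≤ F s := by
      intro s
      rw [hF, cdf_eq_real, cdf_eq_real, map_measureReal_apply hX measurableSet_Iic,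
        map_measureReal_apply hX measurableSet_Iic]
      exact ENNReal.toReal_mono (measure_ne_top _ _) (hstep s)
    have hFn : ∀ (s : ℝ) (n : ℕ), F (s + n * (b - a)) ≤ F s := by
      intro s n
      induction n with
      | zero => simp
      | succ k ih =>
        refine le_trans ?_ ih
        have := hFs (s + k * (b - a))
        have e : s + ((k + 1 : ℕ) : ℝ) * (b - a) = s + k * (b - a) + (b - a) := by
          push_cast
          ring
        rw [e]
        exact this
    have hone : ∀ s : ℝ, 1 ≤ F s := by
      intro s
      have ht : Filter.Tendsto (fun n : ℕ => s + n * (b - a)) Filter.atTop Filter.atTop :=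
        Filter.tendsto_atTop_add_const_left _ _
          (tendsto_natCast_atTop_atTop.atTop_mul_const (sub_pos.2 hab))
      exact le_of_tendsto ((tendsto_cdf_atTop _).comp ht) (Filter.Eventually.of_forall (hFn s))
    have := ge_of_tendsto (tendsto_cdf_atBot ((ℙ : Measure Ω).map X))
      (Filter.Eventually.of_forall hone)
    linarith
  have hsep : ∀ a : ℝ, (∀ᵐ ω ∂(ℙ : Measure Ω), a < Y ω) ∨ (∀ᵐ ω ∂(ℙ : Measure Ω), Y ω ≤ a) := by
    intro a
    by_cases ha : (ℙ : Measure Ω) (Y ⁻¹' Set.Iic a) = 0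
    · left
      rw [ae_iff]
      simpa [Set.preimage] using ha
    · right
      have : ∀ n : ℕ, ∀ᵐ ω ∂(ℙ : Measure Ω), Y ω < a + 1 / ((n : ℝ) + 1) := by
        intro n
        have h := not_not.1 (key a (a + 1 / ((n : ℝ) + 1))
          (by have : (0 : ℝ) < 1 / ((n : ℝ) + 1) := by positivity
              linarith) ha)
        rw [ae_iff]
        simpa only [Set.preimage, Set.mem_Ici, not_lt] using h
      filter_upwards [ae_all_iff.2 this] with ω h
      have ht := (tendsto_one_div_add_atTop_nhds_zero_nat (𝕜 := ℝ)).const_add a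
      rw [add_zero] at ht
      exact ge_of_tendsto ht (Filter.Eventually.of_forall fun n => (h n).le)
  have : ∃ C, Y =ᵐ[ℙ] Function.const Ω C := by
    refine Filter.exists_eventuallyEq_const_of_forall_separating
      (· ∈ Set.range (Set.Iic : ℝ → Set ℝ)) ?_
    rintro U ⟨q, rfl⟩
    rcases hsep q with h | h
    · right; simpa using h
    · left; simpa using h
  obtain ⟨C, hC⟩ := this
  exact ⟨C, prob_compl_eq_zero_iff (hY (measurableSet_singleton C)) |>.1 hC⟩
end

section
/- Every Borel measurable function f : ℝ → ℝ satisfying f(x) + f(y) = f((x + y)/(1 − x·y)) for all x, y ∈ ℝ with x·y ≠ 1 is identically zero: f(x) = 0 for every x ∈ ℝ. -/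
theorem arctan_equation_measurable_solution_zero
    (f : ℝ → ℝ) (hf : Measurable f)
    (hfe : ∀ x y : ℝ, x * y ≠ 1 → f x + f y = f ((x + y) / (1 - x * y))) :
    ∀ x : ℝ, f x = 0 := by
  have h0 : f 0 = 0 := by
    have := hfe 0 0 (by norm_num)
    norm_num at this
    exact this
  have hneg : ∀ x, f (-x) = - f x := by
    intro x
    have := hfe x (-x) (by nlinarith [sq_nonneg x])
    simp [h0] at this
    linarith
  have h1 : f 1 = 0 := by
    have a := hfe 1 2 (by norm_num)
    have b := hfe 1 (1/2) (by norm_num)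
    have c := hfe 2 2 (by norm_num)
    have d := hfe (1/2) (1/2) (by norm_num)
    norm_num at a b c d
    have e := hneg 3
    have e' := hneg (4/3)
    linarith
  have hinv : ∀ x, f (x⁻¹) = - f x := by
    intro x
    by_cases hx : x = 0
    · simp [hx, h0]
    by_cases hx1 : x = 1
    · simp [hx1, h1]
    by_cases hx2 : x = -1
    · subst hx2
      have := hneg 1
      norm_num [this, h1]
    have hxx : x * x ≠ 1 := by
      intro h
      rcases mul_self_eq_one_iff.mp h with h | h <;> contradiction
    have hxi : x⁻¹ * x⁻¹ ≠ 1 := by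
      rw [← mul_inv]
      exact fun h => hxx (inv_eq_one.mp h)
    have a := hfe x x hxx
    have b := hfe x⁻¹ x⁻¹ hxi
    have c : (x⁻¹ + x⁻¹) / (1 - x⁻¹ * x⁻¹) = -((x + x) / (1 - x * x)) := by
      have h1 : 1 - x * x ≠ 0 := fun h => hxx (by linarith)
      have h2 : 1 - x⁻¹ * x⁻¹ ≠ 0 := fun h => hxi (by linarith)
      rw [← neg_div, div_eq_div_iff h2 h1]
      field_simp
      ring
    rw [c, hneg] at b
    linarith
  have hpole : ∀ s t, Real.cos s = 0 → f (Real.tan (s + t)) = f (Real.tan t) := by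
    intro s t hs
    have hss : Real.sin s ≠ 0 := by
      intro h
      have := Real.sin_sq_add_cos_sq s
      simp [h, hs] at this
    have : Real.tan (s + t) = -(Real.tan t)⁻¹ := by
      rw [Real.tan_eq_sin_div_cos, Real.tan_eq_sin_div_cos, Real.sin_add, Real.cos_add, hs, inv_div]
      simp only [zero_mul, add_zero, zero_sub]
      rw [div_neg, mul_div_mul_left _ _ hss]
    rw [this, hneg, hinv, neg_neg]
  have htan0 : ∀ s, Real.cos s = 0 → Real.tan s = 0 := by
    intro s hs
    rw [Real.tan_eq_sin_div_cos, hs, div_zero]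
  let g : ℝ →+ ℝ := AddMonoidHom.mk' (fun t => f (Real.tan t)) (by
    intro s t
    by_cases hs : Real.cos s = 0
    · simp [hpole s t hs, htan0 s hs, h0]
    by_cases ht : Real.cos t = 0
    · rw [add_comm s t]
      simp [hpole t s ht, htan0 t ht, h0]
    by_cases hst : Real.cos (s + t) = 0
    · have : Real.tan t = (Real.tan s)⁻¹ := by
        rw [Real.cos_add] at hst
        have hss : Real.sin s ≠ 0 := by
          intro h
          simp [h, hs, ht] at hst
        rw [Real.tan_eq_sin_div_cos, Real.tan_eq_sin_div_cos, inv_div, div_eq_div_iff ht hss]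
        linarith
      rw [htan0 _ hst, h0, this, hinv, add_neg_cancel]
    · have hst' := hst
      rw [Real.cos_add] at hst'
      have h1 : Real.tan s * Real.tan t ≠ 1 := by
        intro h
        rw [Real.tan_eq_sin_div_cos, Real.tan_eq_sin_div_cos, div_mul_div_comm,
          div_eq_one_iff_eq (mul_ne_zero hs ht)] at h
        apply hst'
        linarith
      have h2 : 1 - Real.tan s * Real.tan t ≠ 0 := fun h => h1 (by linarith)
      have := hfe _ _ h1
      rw [this]
      congr 1
      rw [eq_div_iff h2]
      simp only [Real.tan_eq_sin_div_cos, Real.sin_add, Real.cos_add]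
      field_simp
      rw [mul_comm (Real.cos t) (Real.cos s)]
      exact mul_div_cancel_right₀ _ hst')
  have hgc : Continuous g := by
    apply MeasureTheory.Measure.AddMonoidHom.continuous_of_measurable
    apply hf.comp
    have : Real.tan = fun x => Real.sin x / Real.cos x := funext Real.tan_eq_sin_div_cos
    rw [this]
    exact Real.measurable_sin.div Real.measurable_cos
  have hpi : g Real.pi = 0 := by
    change f (Real.tan Real.pi) = 0
    rw [Real.tan_pi, h0]
  intro x
  have key := map_real_smul g hgc (Real.arctan x / Real.pi) Real.pi
  rw [hpi, smul_zero, smul_eq_mul, div_mul_cancel₀ _ Real.pi_ne_zero] at key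
  change f (Real.tan (Real.arctan x)) = 0 at key
  rwa [Real.tan_arctan] at key
end

section
/- Let f : ℝ → ℝ be a Borel measurable function satisfying the arctan equation f(x) + f(y) = f((x + y)/(1 − x·y)) for all x, y ∈ ℝ with x·y ≠ 1, and suppose f(y) = 0 for Lebesgue-almost every y ∈ ℝ. Then f(x) = 0 for every x ∈ ℝ (not just almost every x). -/
open MeasureTheory

theorem arctan_equation_ae_zero_eq_zero
    (f : ℝ → ℝ) (hf : Measurable f)
    (hfe : ∀ x y : ℝ, x * y ≠ 1 → f x + f y = f ((x + y) / (1 - x * y)))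
    (h0 : ∀ᵐ y ∂(volume : Measure ℝ), f y = 0) :
    ∀ x : ℝ, f x = 0 := by
  intro x
  by_contra hx
  have hN : volume {y : ℝ | ¬ f y = 0} = 0 := h0
  have hN' : volume ({y : ℝ | ¬ f y = 0} ∩ {z : ℝ | 1 + x * z ≠ 0}) = 0 :=
    measure_mono_null Set.inter_subset_left hN
  have hI : volume ((fun z : ℝ => (z - x) / (1 + x * z)) ''
      ({y : ℝ | ¬ f y = 0} ∩ {z : ℝ | 1 + x * z ≠ 0})) = 0 := by
    apply addHaar_image_eq_zero_of_differentiableOn_of_addHaar_eq_zero volume _ hN'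
    intro z hz
    have hz2 : 1 + x * z ≠ 0 := hz.2
    apply DifferentiableAt.differentiableWithinAt
    apply DifferentiableAt.div <;> first | fun_prop | exact hz2
  have hP : volume ({x⁻¹} : Set ℝ) = 0 := by simp
  have hU := measure_union_null (measure_union_null hN hI) hP
  have : (Set.univ : Set ℝ) ⊆ ({y : ℝ | ¬ f y = 0} ∪ ((fun z : ℝ => (z - x) / (1 + x * z)) ''
      ({y : ℝ | ¬ f y = 0} ∩ {z : ℝ | 1 + x * z ≠ 0}))) ∪ {x⁻¹} := by
    intro y _
    by_cases hy : f y = 0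
    · by_cases hxy : x * y = 1
      · right
        exact eq_inv_of_mul_eq_one_right hxy
      · left; right
        have h1 : 1 - x * y ≠ 0 := fun h => hxy (by linarith)
        have h2 : 1 + x ^ 2 ≠ 0 := by positivity
        have h3 : 1 + x * ((x + y) / (1 - x * y)) = (1 + x ^ 2) / (1 - x * y) := by
          field_simp; ring
        refine ⟨(x + y) / (1 - x * y), ⟨?_, ?_⟩, ?_⟩
        · show ¬ _ = _
          rw [← hfe x y hxy, hy, add_zero]; exact hx
        · show _ ≠ _
          rw [h3]; exact div_ne_zero h2 h1
        · show _ / _ = _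
          rw [h3]; field_simp; ring
    · left; left; exact hy
  have h := measure_mono_null this hU
  simp at h
end

section
/- Every continuous function f : ℝ → ℝ satisfying the arctan equation f(x) + f(y) = f((x + y)/(1 − x·y)) for all x, y ∈ ℝ with x·y ≠ 1 is identically zero: f(x) = 0 for every x ∈ ℝ. -/
theorem arctan_equation_continuous_solution_zero
    (f : ℝ → ℝ) (hf : Continuous f)
    (hfe : ∀ x y : ℝ, x * y ≠ 1 → f x + f y = f ((x + y) / (1 - x * y))) :
    ∀ x : ℝ, f x = 0 := by
  have h0 : f 0 = 0 := by
    have := hfe 0 0 (by norm_num)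
    norm_num at this
    linarith
  have hodd : ∀ x, f (-x) = - f x := by
    intro x
    have := hfe x (-x) (by nlinarith [sq_nonneg x])
    rw [add_neg_cancel, zero_div, h0] at this
    linarith
  obtain ⟨C, hC⟩ := (isCompact_Icc (a := (-3:ℝ)) (b := 3)).exists_bound_of_continuousOn
    hf.continuousOn
  simp only [Real.norm_eq_abs, Set.mem_Icc] at hC
  have hb : ∀ x, |f x| ≤ 2 * C := by
    intro x
    have h1 := hC 1 (by norm_num)
    by_cases hx : -3 ≤ x ∧ x ≤ 3
    · have := hC x hx
      linarith [abs_nonneg (f x)]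
    · have key : x * 1 ≠ 1 := by
        intro h
        apply hx
        constructor <;> linarith
      have e := hfe x 1 key
      have h2 := hC ((x + 1) / (1 - x * 1)) (by
        by_cases h3 : x ≤ 3
        · have h4 : x < -3 := by
            by_contra h5
            exact hx ⟨by linarith, h3⟩
          have : 0 < 1 - x * 1 := by linarith
          rw [le_div_iff₀ this, div_le_iff₀ this]
          constructor <;> linarith
        · have : 1 - x * 1 < 0 := by linarith
          rw [le_div_iff_of_neg this, div_le_iff_of_neg this]
          constructor <;> linarith)
      rw [← e] at h2
      rw [abs_le] at *
      constructor <;> linarith [h2.1, h2.2, h1.1, h1.2]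
  have half : ∀ M, (∀ x, |f x| ≤ M) → ∀ x, |f x| ≤ M / 2 := by
    intro M hM
    have hgen : ∀ x : ℝ, x * x ≠ 1 → |f x| ≤ M / 2 := by
      intro x hx
      have a := hfe x x hx
      have b := hM ((x + x) / (1 - x * x))
      rw [← a] at b
      rw [abs_le] at *
      constructor <;> linarith [b.1, b.2]
    have h1 : |f 1| ≤ M / 2 := by
      have a := hfe 1 (1/2) (by norm_num)
      have b := hfe 1 (-(1/2)) (by norm_num)
      rw [hodd] at b
      have e3 : ((1:ℝ) + 1/2) / (1 - 1 * (1/2)) = 3 := by norm_num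
      have e4 : ((1:ℝ) + -(1/2)) / (1 - 1 * -(1/2)) = 1/3 := by norm_num
      rw [e3] at a
      rw [e4] at b
      have c := hgen 3 (by norm_num)
      have d := hgen (1/3) (by norm_num)
      rw [abs_le] at *
      constructor <;> linarith [c.1, c.2, d.1, d.2]
    intro x
    by_cases hx : x * x = 1
    · rcases mul_self_eq_one_iff.mp hx with rfl | rfl
      · exact h1
      · rw [hodd, abs_neg]
        exact h1
    · exact hgen x hx
  have hn : ∀ n : ℕ, ∀ x, |f x| ≤ 2 * C * (1 / 2) ^ n := by
    intro n
    induction n with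
    | zero => simpa using hb
    | succ n ih =>
      intro x
      have := half _ ih x
      rw [pow_succ]
      linarith
  intro x
  have ht : Filter.Tendsto (fun n : ℕ => 2 * C * (1 / 2 : ℝ) ^ n) Filter.atTop (nhds (2 * C * 0)) :=
    (tendsto_pow_atTop_nhds_zero_of_lt_one (by norm_num) (by norm_num)).const_mul _
  have := ge_of_tendsto' ht (fun n => hn n x)
  rw [mul_zero] at this
  exact abs_nonpos_iff.mp this
end
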